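/- Bound for the error term ξ₃: Assume p(ρ) = kρ^γ with k > 0, γ ≥ 1. Let (ρ,n) ∈ L¹_loc((0,∞)×ℝ)² with ρ ≥ 0 a.e., and let (ρ̄,n̄) ∈ C¹((0,∞)×ℝ)² with inf ρ̄ > 0. Then pointwise a.e. the error term ξ₃ = −(ρ − ρ̄) h″(ρ̄) R̄₁, where R̄₁ = ρ̄_τ − (y/2)ρ̄_y + n̄_y, satisfies |ξ₃| ≤ (2γ|R̄₁|/ρ̄) h(ρ|ρ̄) + ρ̄ |h″(ρ̄) R̄₁|. -/

import Mathlib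

noncomputable section
open MeasureTheory Real Set Filter

namespace DampedEuler

/-- Partial derivative in the first (time) variable. -/
def pd1 (f : ℝ → ℝ → ℝ) (τ y : ℝ) : ℝ := deriv (fun s => f s y) τ

/-- Partial derivative in the second (space) variable. -/
def pd2 (f : ℝ → ℝ → ℝ) (τ y : ℝ) : ℝ := deriv (f τ) y

/-- Smooth compactly supported test functions on `ℝ × ℝ`. -/
def IsTest (φ : ℝ → ℝ → ℝ) : Prop :=
  ContDiff ℝ (⊤ : ℕ∞) (fun q : ℝ × ℝ => φ q.1 q.2) ∧
  HasCompactSupport (fun q : ℝ × ℝ => φ q.1 q.2)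

/-- `C¹` compactly supported test functions on `ℝ`. -/
def IsTest1 (φ : ℝ → ℝ) : Prop := ContDiff ℝ 1 φ ∧ HasCompactSupport φ

/-- γ-law pressure. -/
def pGam (k γ : ℝ) (z : ℝ) : ℝ := k * z ^ γ

/-- Internal energy for the γ-law. -/
def hGam (k γ : ℝ) (z : ℝ) : ℝ :=
  if γ = 1 then k * z * Real.log z else k / (γ - 1) * z ^ γ

/-- Relative internal energy. -/
def hRel (h : ℝ → ℝ) (ρ ρb : ℝ) : ℝ := h ρ - h ρb - deriv h ρb * (ρ - ρb)

/-- Relative entropy density. -/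
def relEnt (h : ℝ → ℝ) (τ ρ n ρb nb : ℝ) : ℝ :=
  (1/2) * Real.exp (-τ) * ρ * (n / ρ - nb / ρb) ^ 2 + hRel h ρ ρb

/-- Relative entropy flux. -/
def relFlux (h : ℝ → ℝ) (τ ρ n ρb nb : ℝ) : ℝ :=
  (1/2) * Real.exp (-τ) * n * (n / ρ - nb / ρb) ^ 2
    + ρ * (deriv h ρ - deriv h ρb) * (n / ρ - nb / ρb)
    + nb / ρb * hRel h ρ ρb

/-- Total relative entropy. -/
def totE (h : ℝ → ℝ) (τ : ℝ) (ρ n ρb nb : ℝ → ℝ) : ℝ :=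
  ∫ y : ℝ, relEnt h τ (ρ y) (n y) (ρb y) (nb y)

/-- Finiteness of the total relative entropy. -/
def totEFin (h : ℝ → ℝ) (τ : ℝ) (ρ n ρb nb : ℝ → ℝ) : Prop :=
  Integrable (fun y : ℝ => relEnt h τ (ρ y) (n y) (ρb y) (nb y))

/-- The step function `ρ̂`. -/
def rhoHat (ρm ρp : ℝ) (y : ℝ) : ℝ := if y < 0 then ρm else ρp

/-- Entropy density. -/
def entFn (h : ℝ → ℝ) (τ ρ n : ℝ) : ℝ := Real.exp (-τ) * n ^ 2 / (2 * ρ) + h ρ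

/-- Entropy flux. -/
def entFlux (h : ℝ → ℝ) (τ ρ n : ℝ) : ℝ :=
  Real.exp (-τ) * n ^ 3 / (2 * ρ ^ 2) + n * deriv h ρ

/-- Weak solution of the scaled damped Euler system. -/
structure IsWeakSol (p : ℝ → ℝ) (α : ℝ) (ρ n : ℝ → ℝ → ℝ) (ρ₀ n₀ : ℝ → ℝ) : Prop where
  loc_rho : LocallyIntegrableOn (fun q : ℝ × ℝ => ρ q.1 q.2) (Ici 0 ×ˢ univ)
  loc_n : LocallyIntegrableOn (fun q : ℝ × ℝ => n q.1 q.2) (Ici 0 ×ˢ univ)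
  loc_kin : LocallyIntegrableOn (fun q : ℝ × ℝ => (n q.1 q.2) ^ 2 / ρ q.1 q.2) (Ici 0 ×ˢ univ)
  loc_p : LocallyIntegrableOn (fun q : ℝ × ℝ => p (ρ q.1 q.2)) (Ici 0 ×ˢ univ)
  rho_nonneg : ∀ᵐ q : ℝ × ℝ ∂(volume.restrict ((Ici 0) ×ˢ univ)), 0 ≤ ρ q.1 q.2
  mass_eq : ∀ φ : ℝ → ℝ → ℝ, IsTest φ →
    -(∫ τ in Ioi (0:ℝ), ∫ y : ℝ,
        (pd1 φ τ y * ρ τ y + pd2 φ τ y * (-(y / 2) * ρ τ y + n τ y)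
          - (1/2) * φ τ y * ρ τ y))
      = ∫ y : ℝ, φ 0 y * ρ₀ y
  mom_eq : ∀ ψ : ℝ → ℝ → ℝ, IsTest ψ →
    -(∫ τ in Ioi (0:ℝ), ∫ y : ℝ,
        (pd1 ψ τ y * n τ y
          + pd2 ψ τ y * (-(y / 2) * n τ y + (n τ y) ^ 2 / ρ τ y + Real.exp τ * p (ρ τ y))
          - ψ τ y * Real.exp τ * α * n τ y))
      = ∫ y : ℝ, ψ 0 y * n₀ y

/-- Entropy condition (E1). -/
def CondE1 (h : ℝ → ℝ) (α : ℝ) (ρ n : ℝ → ℝ → ℝ) (ρ₀ n₀ : ℝ → ℝ) : Prop :=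
  (∀ T > (0:ℝ), ∃ M : ℝ, ∀ᵐ q : ℝ × ℝ, q.1 ∈ Icc 0 T →
      |ρ q.1 q.2| ≤ M ∧ |n q.1 q.2 / ρ q.1 q.2| ≤ M) ∧
  LocallyIntegrableOn (fun q : ℝ × ℝ => h (ρ q.1 q.2)) (Ici 0 ×ˢ univ) ∧
  ∀ χ : ℝ → ℝ → ℝ, IsTest χ → (∀ τ y, 0 ≤ χ τ y) →
    (∫ τ in Ioi (0:ℝ), ∫ y : ℝ,
        (-(pd1 χ τ y) * entFn h τ (ρ τ y) (n τ y)
          + pd2 χ τ y * (y / 2 * entFn h τ (ρ τ y) (n τ y) - entFlux h τ (ρ τ y) (n τ y))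
          + χ τ y * ((1/2) * entFn h τ (ρ τ y) (n τ y) + α * (n τ y) ^ 2 / ρ τ y)))
      ≤ ∫ y : ℝ, χ 0 y * entFn h 0 (ρ₀ y) (n₀ y)

/-- A smoothened version of the step function. -/
def IsRhoInf (ρm ρp : ℝ) (ρInf : ℝ → ℝ) : Prop :=
  ContDiff ℝ 1 ρInf ∧ ∃ R > (0:ℝ), (∀ y > R, ρInf y = ρp) ∧ ∀ y < -R, ρInf y = ρm

/-- Entropy condition (E2). -/
def CondE2 (h : ℝ → ℝ) (α ρm ρp : ℝ) (ρ n : ℝ → ℝ → ℝ) (ρ₀ n₀ : ℝ → ℝ) : Prop :=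
  ∃ ρInf : ℝ → ℝ, IsRhoInf ρm ρp ρInf ∧
    ∀ φ : ℝ → ℝ, IsTest1 φ → (∀ τ, 0 ≤ φ τ) →
      (∫ τ in Ioi (0:ℝ),
          (-(deriv φ τ) * totE h τ (ρ τ) (n τ) ρInf (fun _ => 0)
            + φ τ * ((1/2) * totE h τ (ρ τ) (n τ) ρInf (fun _ => 0)
              + ∫ y : ℝ, α * (n τ y) ^ 2 / ρ τ y)))
        ≤ φ 0 * totE h 0 ρ₀ n₀ ρInf (fun _ => 0)
          + ∫ τ in Ioi (0:ℝ), φ τ *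
              ∫ y : ℝ, deriv (fun z => deriv h (ρInf z)) y * (y / 2 * (ρ τ y - ρInf y) - n τ y)

/-- First residual. -/
def R1 (ρb nb : ℝ → ℝ → ℝ) (τ y : ℝ) : ℝ :=
  pd1 ρb τ y - y / 2 * pd2 ρb τ y + pd2 nb τ y

/-- Second residual. -/
def R2 (p : ℝ → ℝ) (α : ℝ) (ρb nb : ℝ → ℝ → ℝ) (τ y : ℝ) : ℝ :=
  pd1 nb τ y - y / 2 * pd2 nb τ y - (1/2) * nb τ y
    + pd2 (fun s z => (nb s z) ^ 2 / ρb s z) τ y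
    + Real.exp τ * (pd2 (fun s z => p (ρb s z)) τ y + α * nb τ y)

/-- Combined residual. -/
def Rbar (p : ℝ → ℝ) (α : ℝ) (ρb nb : ℝ → ℝ → ℝ) (τ y : ℝ) : ℝ :=
  nb τ y / ρb τ y * R1 ρb nb τ y - R2 p α ρb nb τ y

/-- Relative pressure. -/
def pRel (p : ℝ → ℝ) (ρ ρb : ℝ) : ℝ := p ρ - p ρb - deriv p ρb * (ρ - ρb)

/-- Error term `ξ₁`. -/
def xi1 (p : ℝ → ℝ) (ρ n ρb nb : ℝ → ℝ → ℝ) (τ y : ℝ) : ℝ :=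
  -(pd2 (fun s z => nb s z / ρb s z) τ y) *
    (Real.exp (-τ) * ρ τ y * (n τ y / ρ τ y - nb τ y / ρb τ y) ^ 2
      + pRel p (ρ τ y) (ρb τ y))

/-- Error term `ξ₂`. -/
def xi2 (p : ℝ → ℝ) (α : ℝ) (ρ n ρb nb : ℝ → ℝ → ℝ) (τ y : ℝ) : ℝ :=
  Real.exp (-τ) * Rbar p α ρb nb τ y * (ρ τ y / ρb τ y)
    * (n τ y / ρ τ y - nb τ y / ρb τ y)

/-- Error term `ξ₃`. -/
def xi3 (h : ℝ → ℝ) (ρ ρb nb : ℝ → ℝ → ℝ) (τ y : ℝ) : ℝ :=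
  -(ρ τ y - ρb τ y) * deriv (deriv h) (ρb τ y) * R1 ρb nb τ y

/-- Total error term `ξ = ξ₁ + ξ₂ + ξ₃`. -/
def xiTot (h p : ℝ → ℝ) (α : ℝ) (ρ n ρb nb : ℝ → ℝ → ℝ) (τ y : ℝ) : ℝ :=
  xi1 p ρ n ρb nb τ y + xi2 p α ρ n ρb nb τ y + xi3 h ρ ρb nb τ y

/-- Integrated error term `Ξ`. -/
def Xi (h p : ℝ → ℝ) (α : ℝ) (ρ n ρb nb : ℝ → ℝ → ℝ) (τ : ℝ) : ℝ :=
  ∫ y : ℝ, xiTot h p α ρ n ρb nb τ y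

/-- Frictional dissipation term `D_α`. -/
def Dalpha (α : ℝ) (ρ n ρb nb : ℝ → ℝ) : ℝ :=
  α * ∫ y : ℝ, ρ y * (n y / ρ y - nb y / ρb y) ^ 2

/-- Regularity of the reference pair: `C¹` on `(0,∞)×ℝ` and continuous on `[0,∞)×ℝ`. -/
def RefReg (ρb nb : ℝ → ℝ → ℝ) : Prop :=
  ContDiffOn ℝ 1 (fun q : ℝ × ℝ => ρb q.1 q.2) (Ioi 0 ×ˢ univ) ∧
  ContDiffOn ℝ 1 (fun q : ℝ × ℝ => nb q.1 q.2) (Ioi 0 ×ˢ univ) ∧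
  ContinuousOn (fun q : ℝ × ℝ => ρb q.1 q.2) (Ici 0 ×ˢ univ) ∧
  ContinuousOn (fun q : ℝ × ℝ => nb q.1 q.2) (Ici 0 ×ˢ univ)

/-- Membership in `L^∞_loc([0,∞); L¹(ℝ) ∩ L^∞(ℝ))`. -/
def LinfLocL1Linf (f : ℝ → ℝ → ℝ) : Prop :=
  ∀ T > (0:ℝ), ∃ M : ℝ, ∀ τ ∈ Icc (0:ℝ) T,
    Integrable (f τ) ∧ (∫ y : ℝ, |f τ y|) ≤ M ∧ ∀ y, |f τ y| ≤ M

/-- The improved pressure condition `(eq:pres.better)`. -/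
def PresBetter (p : ℝ → ℝ) : Prop :=
  (∃ c > (0:ℝ), ∀ z > (0:ℝ), deriv p z ≤ c * p z / z) ∧
  IntegrableOn (fun z => p z / z ^ 2) (Ioc (0:ℝ) 1)

/-- The global relative entropy inequality `(eq:relent.total.weak)`. -/
def RelEntIneq (h p : ℝ → ℝ) (α : ℝ) (ρ n ρb nb : ℝ → ℝ → ℝ) (ρ₀ n₀ : ℝ → ℝ) : Prop :=
  ∀ φ : ℝ → ℝ, IsTest1 φ → (∀ τ, 0 ≤ φ τ) →
    (∫ τ in Ioi (0:ℝ),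
        (-(deriv φ τ) * totE h τ (ρ τ) (n τ) (ρb τ) (nb τ)
          + φ τ * ((1/2) * totE h τ (ρ τ) (n τ) (ρb τ) (nb τ)
            + Dalpha α (ρ τ) (n τ) (ρb τ) (nb τ))))
      ≤ φ 0 * totE h 0 ρ₀ n₀ (ρb 0) (nb 0)
        + ∫ τ in Ioi (0:ℝ), φ τ * Xi h p α ρ n ρb nb τ


lemma hGam_d1 (k γ : ℝ) {b : ℝ} (hb : 0 < b) :
    deriv (hGam k γ) b = if γ = 1 then k * (Real.log b + 1) else k / (γ - 1) * (γ * b ^ (γ - 1)) := by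
  by_cases h : γ = 1
  · have : hGam k γ = fun z => k * (z * Real.log z) := by
      funext z; simp [hGam, h, mul_assoc]
    rw [this, if_pos h]
    exact ((Real.hasDerivAt_mul_log hb.ne').const_mul k).deriv
  · have : hGam k γ = fun z => k / (γ - 1) * z ^ γ := by
      funext z; simp [hGam, h]
    rw [this, if_neg h]
    exact ((Real.hasDerivAt_rpow_const (p := γ) (Or.inl hb.ne')).const_mul _).deriv

lemma hGam_d2 (k γ : ℝ) {b : ℝ} (hb : 0 < b) :
    deriv (deriv (hGam k γ)) b = k * γ * b ^ (γ - 1) / b := by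
  have hev : deriv (hGam k γ) =ᶠ[nhds b] fun z =>
      if γ = 1 then k * (Real.log z + 1) else k / (γ - 1) * (γ * z ^ (γ - 1)) := by
    filter_upwards [lt_mem_nhds hb] with z hz using hGam_d1 k γ hz
  rw [hev.deriv_eq]
  by_cases h : γ = 1
  · simp only [if_pos h]
    rw [(((Real.hasDerivAt_log hb.ne').add_const 1).const_mul k).deriv]
    simp [h, div_eq_mul_inv]
  · simp only [if_neg h]
    rw [(((Real.hasDerivAt_rpow_const (p := γ - 1) (Or.inl hb.ne')).const_mul γ).const_mul _).deriv]
    rw [Real.rpow_sub_one hb.ne' (γ - 1)]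
    have : γ - 1 ≠ 0 := sub_ne_zero.mpr h
    field_simp

lemma log_bound {r b : ℝ} (hr : 0 < r) (hb : 0 < b) :
    2 * (r - √r * √b) ≤ r * (Real.log r - Real.log b) := by
  have hsr := Real.sqrt_pos.mpr hr
  have hsb := Real.sqrt_pos.mpr hb
  have h1 := Real.log_le_sub_one_of_pos (div_pos hsb hsr)
  rw [Real.log_div hsb.ne' hsr.ne', Real.log_sqrt hb.le, Real.log_sqrt hr.le] at h1
  have h2 : r * (√b / √r) = √r * √b := by
    nth_rewrite 1 [← Real.mul_self_sqrt hr.le]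
    field_simp
  nlinarith [mul_le_mul_of_nonneg_left h1 hr.le]

lemma hRel_lower (k γ : ℝ) (hk : 0 < k) (hγ : 1 ≤ γ) {r b : ℝ} (hr : 0 ≤ r) (hb : 0 < b) :
    k * b ^ (γ - 1) * (√r - √b) ^ 2 ≤ hRel (hGam k γ) r b := by
  have e2 : (√r - √b) ^ 2 = r + b - 2 * (√r * √b) := by
    rw [sub_sq, Real.sq_sqrt hr, Real.sq_sqrt hb.le]; ring
  rw [hRel, hGam_d1 k γ hb, e2]
  by_cases h : γ = 1
  · simp only [hGam, if_pos h]
    subst h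
    simp only [sub_self, Real.rpow_zero]
    rcases hr.eq_or_lt with rfl | hr
    · simp; linarith
    · nlinarith [mul_le_mul_of_nonneg_left (log_bound hr hb) hk.le]
  · simp only [hGam, if_neg h]
    have hg : 0 < γ - 1 := sub_pos.mpr (lt_of_le_of_ne hγ (Ne.symm h))
    have hbg : b ^ γ = b * b ^ (γ - 1) := by
      rw [Real.rpow_sub_one hb.ne']; field_simp
    have hB : 0 < b ^ (γ - 1) := Real.rpow_pos_of_pos hb _
    have key : (r + 2 * (γ - 1) * (r - √r * √b)) * b ^ (γ - 1) ≤ r ^ γ := by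
      rcases hr.eq_or_lt with rfl | hr
      · simp [Real.zero_rpow (by linarith : γ ≠ 0)]
      · have hrg : r ^ γ = r * Real.exp ((γ - 1) * (Real.log r - Real.log b)) * b ^ (γ - 1) := by
          rw [Real.rpow_def_of_pos hr, Real.rpow_def_of_pos hb]
          nth_rewrite 2 [← Real.exp_log hr]
          rw [← Real.exp_add, ← Real.exp_add]
          congr 1; ring
        rw [hrg]
        refine mul_le_mul_of_nonneg_right ?_ hB.le
        have h1 := mul_le_mul_of_nonneg_left
          (Real.add_one_le_exp ((γ - 1) * (Real.log r - Real.log b))) hr.le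
        have h2 := mul_le_mul_of_nonneg_left (log_bound hr hb) hg.le
        linarith
    have hd : k / (γ - 1) * r ^ γ - k / (γ - 1) * b ^ γ
        - k / (γ - 1) * (γ * b ^ (γ - 1)) * (r - b)
        = k / (γ - 1) * (r ^ γ - b * b ^ (γ - 1) - γ * b ^ (γ - 1) * (r - b)) := by
      rw [hbg]; ring
    rw [hd]
    have hl : k * b ^ (γ - 1) * (r + b - 2 * (√r * √b))
        = k / (γ - 1) * ((γ - 1) * (b ^ (γ - 1) * (r + b - 2 * (√r * √b)))) := by
      field_simp
    rw [hl]
    refine mul_le_mul_of_nonneg_left ?_ (by positivity)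
    linarith

lemma abs_bound {r b : ℝ} (hr : 0 ≤ r) (hb : 0 ≤ b) :
    |r - b| ≤ 2 * (√r - √b) ^ 2 + b := by
  have h1 := Real.sq_sqrt hr
  have h2 := Real.sq_sqrt hb
  rw [abs_le]
  constructor
  · nlinarith [sq_nonneg (3 * √r - 2 * √b), sq_nonneg (√b)]
  · nlinarith [sq_nonneg (√r - 2 * √b)]

/-- **Bound for the error term `ξ₃`.** -/
theorem xi3_bound
    (k γ : ℝ) (hk : 0 < k) (hγ : 1 ≤ γ)
    (ρ n : ℝ → ℝ → ℝ)
    (hρloc : LocallyIntegrableOn (fun q : ℝ × ℝ => ρ q.1 q.2) (Ioi 0 ×ˢ univ))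
    (hnloc : LocallyIntegrableOn (fun q : ℝ × ℝ => n q.1 q.2) (Ioi 0 ×ˢ univ))
    (hρpos : ∀ᵐ q : ℝ × ℝ ∂(volume.restrict (Ioi 0 ×ˢ univ)), 0 ≤ ρ q.1 q.2)
    (ρb nb : ℝ → ℝ → ℝ)
    (hρbC1 : ContDiffOn ℝ 1 (fun q : ℝ × ℝ => ρb q.1 q.2) (Ioi 0 ×ˢ univ))
    (hnbC1 : ContDiffOn ℝ 1 (fun q : ℝ × ℝ => nb q.1 q.2) (Ioi 0 ×ˢ univ))
    (hρbinf : ∃ ε > (0:ℝ), ∀ τ y : ℝ, ε ≤ ρb τ y) :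
    ∀ᵐ q : ℝ × ℝ ∂(volume.restrict (Ioi 0 ×ˢ univ)),
      |xi3 (hGam k γ) ρ ρb nb q.1 q.2|
        ≤ 2 * γ * |R1 ρb nb q.1 q.2| / ρb q.1 q.2
            * hRel (hGam k γ) (ρ q.1 q.2) (ρb q.1 q.2)
          + ρb q.1 q.2 * |deriv (deriv (hGam k γ)) (ρb q.1 q.2) * R1 ρb nb q.1 q.2| := by
  obtain ⟨ε, hε, hle⟩ := hρbinf
  filter_upwards [hρpos] with q hr
  have hb : 0 < ρb q.1 q.2 := lt_of_lt_of_le hε (hle _ _)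
  have hlow := hRel_lower k γ hk hγ hr hb
  have hab := abs_bound hr hb.le
  rw [xi3, hGam_d2 k γ hb]
  generalize hRel (hGam k γ) (ρ q.1 q.2) (ρb q.1 q.2) = H at *
  generalize R1 ρb nb q.1 q.2 = R at *
  generalize ρb q.1 q.2 = b at *
  generalize ρ q.1 q.2 = r at *
  have hB : 0 < b ^ (γ - 1) := Real.rpow_pos_of_pos hb _
  generalize b ^ (γ - 1) = B at *
  have hg : 0 < γ := by linarith
  have hc : 0 < k * γ * B / b := by positivity
  rw [abs_mul, abs_mul, abs_neg, abs_mul, abs_of_pos hc]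
  have h1 : |r - b| * (k * B) ≤ 2 * H + b * (k * B) := by
    nlinarith [mul_le_mul_of_nonneg_right hab (mul_pos hk hB).le]
  have h2 := mul_le_mul_of_nonneg_left h1 (by positivity : 0 ≤ γ * |R| / b)
  calc _ = γ * |R| / b * (|r - b| * (k * B)) := by ring
    _ ≤ _ := h2
    _ = _ := by ring

end DampedEuler
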